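/- Let (u,v) be as in the context and let B = B_d(z) be an open ball whose closure is contained in Ω. Then for every y ∈ ℝ²: (2/(p+1)) ∫_B v^{p+1} dx + (2/(q+1)) ∫_B u^{q+1} dx = ∫_{∂B} [⟨∇u(x),ν(x)⟩⟨∇v(x),x−y⟩ + ⟨∇v(x),ν(x)⟩⟨∇u(x),x−y⟩] dσ(x) − ∫_{∂B} ⟨∇u(x),∇v(x)⟩⟨x−y,ν(x)⟩ dσ(x) + ∫_{∂B} ⟨x−y,ν(x)⟩ (v(x)^{p+1}/(p+1) + u(x)^{q+1}/(q+1)) dσ(x). -/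

import Mathlib

open MeasureTheory Filter Metric Real
open scoped Topology ENNReal NNReal RealInnerProductSpace

noncomputable section

/-- The plane `ℝ²`. -/
abbrev E2 : Type := EuclideanSpace ℝ (Fin 2)

/-- The Laplacian of `f : ℝ² → ℝ`, as the sum of the second partial derivatives. -/
def plap (f : E2 → ℝ) (x : E2) : ℝ :=
  ∑ i : Fin 2, fderiv ℝ (fun y => fderiv ℝ f y (EuclideanSpace.single i 1)) x
    (EuclideanSpace.single i 1)

/-- The sup of `|f|` over a set `s`. -/
def supOn (s : Set E2) (f : E2 → ℝ) : ℝ := sSup ((fun x => |f x|) '' s)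

/-!
For a potential `H` with `∇H = -Δu ∇v - Δv ∇u`, here `H = v ^ (p + 1) / (p + 1) +
u ^ (q + 1) / (q + 1)`, the field `⟪∇v, x - y⟫ ∇u + ⟪∇u, x - y⟫ ∇v - ⟪∇u, ∇v⟫ (x - y) + H (x - y)`
on an `n`-dimensional space has divergence `(2 - n) ⟪∇u, ∇v⟫ + n H`: the second derivatives cancel
because Hessians are symmetric. In the plane this is `2 H`, and the identity is the divergence
theorem on the disc.

The divergence theorem on a disc is the one on a rectangle in polar coordinates: with `e` the radial
and `I e` the angular unit vector, `∂_r (r ⟪F, e⟫) + ∂_θ ⟪F, I e⟫ = r div F`, and the contributions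
of the sides `θ = ± π` cancel by periodicity. The one-dimensional Hausdorff measure on a circle is
arc length because the ratio of chord to arc tends to `1` uniformly as the arc shrinks.
-/

section Divergence

variable {E : Type*} [NormedAddCommGroup E] [NormedSpace ℝ E] {F G : E → E} {f : E → ℝ} {x : E}

/-- The divergence of a vector field, as the trace of its derivative. As with `fderiv`, it is `0`
where the field is not differentiable. -/
def divergence (F : E → E) (x : E) : ℝ :=
  LinearMap.trace ℝ E (fderiv ℝ F x)

lemma divergence_add (hF : DifferentiableAt ℝ F x) (hG : DifferentiableAt ℝ G x) :
    divergence (fun x => F x + G x) x = divergence F x + divergence G x := by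
  simp [divergence, fderiv_fun_add hF hG]

lemma divergence_sub (hF : DifferentiableAt ℝ F x) (hG : DifferentiableAt ℝ G x) :
    divergence (fun x => F x - G x) x = divergence F x - divergence G x := by
  simp [divergence, fderiv_fun_sub hF hG]

lemma divergence_sub_const [FiniteDimensional ℝ E] (y x : E) :
    divergence (fun x => x - y) x = Module.finrank ℝ E := by
  simp [divergence, fderiv_sub_const, LinearMap.trace_id]

lemma divergence_smul [FiniteDimensional ℝ E]
    (hf : DifferentiableAt ℝ f x) (hF : DifferentiableAt ℝ F x) :
    divergence (fun x => f x • F x) x = f x * divergence F x + fderiv ℝ f x (F x) := by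
  simp [divergence, fderiv_fun_smul hf hF]

lemma divergence_conj {E' : Type*} [NormedAddCommGroup E'] [NormedSpace ℝ E'] (φ : E' ≃L[ℝ] E)
    (F : E → E) (x : E') :
    divergence (fun x => φ.symm (F (φ x))) x = divergence F (φ x) := by
  have hderiv : fderiv ℝ (fun x => φ.symm (F (φ x))) x =
      φ.symm.toContinuousLinearMap ∘L fderiv ℝ F (φ x) ∘L φ.toContinuousLinearMap := by
    rw [← φ.comp_right_fderiv]
    exact φ.symm.comp_fderiv
  rw [divergence, hderiv]
  exact LinearMap.trace_conj' (fderiv ℝ F (φ x) : E →ₗ[ℝ] E) φ.symm.toLinearEquiv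

end Divergence

section Gradient

variable {E : Type*} [NormedAddCommGroup E] [InnerProductSpace ℝ E] [CompleteSpace E]
  {f : E → ℝ} {x : E}

lemma contDiffAt_gradient (hf : ContDiffAt ℝ 2 f x) : ContDiffAt ℝ 1 (gradient f) x :=
  (InnerProductSpace.toDual ℝ E).symm.contDiff.contDiffAt.comp x
    (hf.fderiv_right (m := 1) (by norm_num))

lemma differentiableAt_gradient (hf : ContDiffAt ℝ 2 f x) : DifferentiableAt ℝ (gradient f) x :=
  (contDiffAt_gradient hf).differentiableAt one_ne_zero

lemma inner_fderiv_gradient (f : E → ℝ) (x v w : E) :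
    ⟪fderiv ℝ (gradient f) x v, w⟫ = fderiv ℝ (fderiv ℝ f) x v w := by
  have hcomp : fderiv ℝ (gradient f) x =
      (InnerProductSpace.toDual ℝ E).symm.toContinuousLinearEquiv.toContinuousLinearMap ∘L
        fderiv ℝ (fderiv ℝ f) x :=
    (InnerProductSpace.toDual ℝ E).symm.toContinuousLinearEquiv.comp_fderiv
  simp [hcomp]

lemma inner_fderiv_gradient_comm (hf : ContDiffAt ℝ 2 f x) (v w : E) :
    ⟪fderiv ℝ (gradient f) x v, w⟫ = ⟪fderiv ℝ (gradient f) x w, v⟫ := by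
  rw [inner_fderiv_gradient, inner_fderiv_gradient, (hf.isSymmSndFDerivAt (by simp)).eq]

end Gradient

section Pohozaev

open scoped Laplacian

variable {E : Type*} [NormedAddCommGroup E] [InnerProductSpace ℝ E] [FiniteDimensional ℝ E]
  {u v : E → ℝ} {x : E}

lemma divergence_gradient (f : E → ℝ) (x : E) : divergence (gradient f) x = Δ f x := by
  rw [divergence, LinearMap.trace_eq_sum_inner _ (stdOrthonormalBasis ℝ E),
    InnerProductSpace.laplacian_eq_iteratedFDeriv_stdOrthonormalBasis]
  simp [real_inner_comm (fderiv ℝ (gradient f) x _), inner_fderiv_gradient,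
    iteratedFDeriv_two_apply]

/-- The Pohozaev vector field of `u`, `v` with potential `H` and pole `y`. Its flux through a sphere
is the boundary term of the Pohozaev identity, and `∇H = -Δu ∇v - Δv ∇u` makes the second
derivatives of `u` and `v` disappear from its divergence. -/
def pohozaevField (u v H : E → ℝ) (y x : E) : E :=
  ⟪gradient v x, x - y⟫ • gradient u x + ⟪gradient u x, x - y⟫ • gradient v x -
    ⟪gradient u x, gradient v x⟫ • (x - y) + H x • (x - y)

lemma contDiffAt_pohozaevField {H : E → ℝ} (hu : ContDiffAt ℝ 2 u x) (hv : ContDiffAt ℝ 2 v x)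
    (hH : ContDiffAt ℝ 1 H x) (y : E) : ContDiffAt ℝ 1 (pohozaevField u v H y) x := by
  have hgu := contDiffAt_gradient hu
  have hgv := contDiffAt_gradient hv
  have hy : ContDiffAt ℝ 1 (fun x : E => x - y) x := contDiffAt_id.sub contDiffAt_const
  exact ((((hgv.inner ℝ hy).smul hgu).add ((hgu.inner ℝ hy).smul hgv)).sub
    ((hgu.inner ℝ hgv).smul hy)).add (hH.smul hy)

lemma divergence_inner_gradient_smul_gradient (hu : ContDiffAt ℝ 2 u x) (hv : ContDiffAt ℝ 2 v x)
    (y : E) :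
    divergence (fun x => ⟪gradient v x, x - y⟫ • gradient u x) x =
      ⟪gradient v x, x - y⟫ * Δ u x + ⟪gradient u x, gradient v x⟫ +
        ⟪fderiv ℝ (gradient v) x (x - y), gradient u x⟫ := by
  have hgu := differentiableAt_gradient hu
  have hgv := differentiableAt_gradient hv
  have hy : DifferentiableAt ℝ (fun x : E => x - y) x := by fun_prop
  rw [divergence_smul (hgv.inner ℝ hy) hgu, divergence_gradient, fderiv_inner_apply ℝ hgv hy,
    fderiv_sub_const, fderiv_fun_id, inner_fderiv_gradient_comm hv,
    real_inner_comm (gradient v x) (gradient u x)]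
  simp only [ContinuousLinearMap.id_apply, add_assoc]

lemma divergence_inner_gradient_smul_sub (hu : ContDiffAt ℝ 2 u x) (hv : ContDiffAt ℝ 2 v x)
    (y : E) :
    divergence (fun x => ⟪gradient u x, gradient v x⟫ • (x - y)) x =
      Module.finrank ℝ E * ⟪gradient u x, gradient v x⟫ +
        ⟪fderiv ℝ (gradient u) x (x - y), gradient v x⟫ +
        ⟪fderiv ℝ (gradient v) x (x - y), gradient u x⟫ := by
  have hgu := differentiableAt_gradient hu
  have hgv := differentiableAt_gradient hv
  rw [divergence_smul (hgu.inner ℝ hgv) (by fun_prop), divergence_sub_const,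
    fderiv_inner_apply ℝ hgu hgv, real_inner_comm (fderiv ℝ (gradient v) x _)]
  ring

lemma divergence_pohozaevField {H : E → ℝ} (hu : ContDiffAt ℝ 2 u x) (hv : ContDiffAt ℝ 2 v x)
    (hH : DifferentiableAt ℝ H x) (y : E) :
    divergence (pohozaevField u v H y) x =
      Δ u x * ⟪gradient v x, x - y⟫ + Δ v x * ⟪gradient u x, x - y⟫ +
        (2 - Module.finrank ℝ E) * ⟪gradient u x, gradient v x⟫ +
        (Module.finrank ℝ E * H x + ⟪gradient H x, x - y⟫) := by
  have hgu := differentiableAt_gradient hu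
  have hgv := differentiableAt_gradient hv
  have hy : DifferentiableAt ℝ (fun x : E => x - y) x := by fun_prop
  have huv := (hgv.inner ℝ hy).fun_smul hgu
  have hvu := (hgu.inner ℝ hy).fun_smul hgv
  have huvy := (hgu.inner ℝ hgv).fun_smul hy
  unfold pohozaevField
  rw [divergence_add ((huv.fun_add hvu).fun_sub huvy) (hH.fun_smul hy),
    divergence_sub (huv.fun_add hvu) huvy, divergence_add huv hvu,
    divergence_inner_gradient_smul_gradient hu hv, divergence_inner_gradient_smul_gradient hv hu,
    divergence_inner_gradient_smul_sub hu hv, divergence_smul hH hy, divergence_sub_const,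
    ← inner_gradient_left, real_inner_comm (gradient u x) (gradient v x)]
  ring

lemma divergence_pohozaevField_of_gradient_eq {H : E → ℝ} (hu : ContDiffAt ℝ 2 u x)
    (hv : ContDiffAt ℝ 2 v x)
    (hH : HasGradientAt H (-(Δ u x) • gradient v x - Δ v x • gradient u x) x) (y : E) :
    divergence (pohozaevField u v H y) x =
      (2 - Module.finrank ℝ E) * ⟪gradient u x, gradient v x⟫ + Module.finrank ℝ E * H x := by
  rw [divergence_pohozaevField hu hv hH.differentiableAt, hH.gradient, inner_sub_left,
    real_inner_smul_left, real_inner_smul_left]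
  ring

end Pohozaev

section CurveLength

lemma mul_hausdorffMeasure_le_hausdorffMeasure_image {X Y : Type*} [EMetricSpace X]
    [MeasurableSpace X] [BorelSpace X] [EMetricSpace Y] [MeasurableSpace Y] [BorelSpace Y]
    {f : X → Y} {s : Set X} {c : ℝ≥0} {d : ℝ} (hc : c ≠ 0) (hd : 0 ≤ d)
    (hf : ∀ x ∈ s, ∀ y ∈ s, c * edist x y ≤ edist (f x) (f y)) :
    (c : ℝ≥0∞) ^ d * μH[d] s ≤ μH[d] (f '' s) := by
  have hc' : (c : ℝ≥0∞) ≠ 0 := ENNReal.coe_ne_zero.2 hc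
  have hanti : AntilipschitzWith c⁻¹ (s.domRestrict f) := fun x y => by
    rw [ENNReal.coe_inv hc, ← ENNReal.mul_le_iff_le_inv hc' ENNReal.coe_ne_top]
    exact hf x x.2 y y.2
  have hle := hanti.le_hausdorffMeasure_image hd Set.univ
  rw [Set.image_univ, Set.range_domRestrict,
    ← isometry_subtype_coe.hausdorffMeasure_image (.inl hd), Subtype.coe_image_univ,
    ENNReal.coe_inv hc, ENNReal.inv_rpow] at hle
  have hrpow_ne_top : (c : ℝ≥0∞) ^ d ≠ ∞ := ENNReal.rpow_ne_top_of_nonneg hd ENNReal.coe_ne_top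
  exact (ENNReal.mul_le_iff_le_inv (by simp [hc]) hrpow_ne_top).2 hle

variable {X : Type*} [MetricSpace X] [MeasurableSpace X] [BorelSpace X] {γ : ℝ → X} {A : Set ℝ}

lemma mul_volume_le_hausdorffMeasure_image {c : ℝ≥0} {δ : ℝ} (hδ : 0 < δ) (hc : c ≠ 0)
    (hγ : ContinuousOn γ A) (hA : MeasurableSet A) (hinj : A.InjOn γ)
    (hexp : ∀ s ∈ A, ∀ t ∈ A, |s - t| ≤ δ → c * |s - t| ≤ dist (γ s) (γ t)) :
    c * volume A ≤ μH[1] (γ '' A) := by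
  -- Two points of the same piece are at distance at most `δ`, so `γ` expands by `c` on each piece.
  let piece : ℤ → Set ℝ := fun k => A ∩ Set.Ioc (k • δ) ((k + 1) • δ)
  have hpiece_sub (k : ℤ) : piece k ⊆ A := Set.inter_subset_left
  have hpiece_meas (k : ℤ) : MeasurableSet (piece k) := hA.inter measurableSet_Ioc
  have hpiece_disj : Pairwise (Function.onFun Disjoint piece) := fun i j hij =>
    (Set.pairwise_disjoint_Ioc_zsmul δ hij).mono Set.inter_subset_right Set.inter_subset_right
  have hA_eq : A = ⋃ k, piece k := by
    rw [← Set.inter_iUnion, iUnion_Ioc_zsmul hδ, Set.inter_univ]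
  have himage_disj : Pairwise (Function.onFun Disjoint fun k => γ '' piece k) := fun i j hij =>
    Set.disjoint_image_image fun s hs t ht hst =>
      (hpiece_disj hij).ne_of_mem hs ht (hinj (hpiece_sub i hs) (hpiece_sub j ht) hst)
  have himage_meas (k : ℤ) : MeasurableSet (γ '' piece k) :=
    (hpiece_meas k).image_of_continuousOn_injOn (hγ.mono (hpiece_sub k))
      (hinj.mono (hpiece_sub k))
  have hpiece_le (k : ℤ) : c * volume (piece k) ≤ μH[1] (γ '' piece k) := by
    rw [← hausdorffMeasure_real, ← ENNReal.rpow_one (c : ℝ≥0∞)]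
    refine mul_hausdorffMeasure_le_hausdorffMeasure_image hc zero_le_one ?_
    rintro s ⟨hsA, hs⟩ t ⟨htA, ht⟩
    have hst : |s - t| ≤ δ := by
      rw [add_one_zsmul] at hs ht
      rw [abs_sub_le_iff]
      constructor <;> linarith [hs.1, hs.2, ht.1, ht.2]
    rw [edist_nndist, edist_nndist]
    exact_mod_cast hexp s hsA t htA hst
  calc c * volume A = ∑' k, c * volume (piece k) := by
        rw [ENNReal.tsum_mul_left, ← measure_iUnion hpiece_disj hpiece_meas, ← hA_eq]
    _ ≤ ∑' k, μH[1] (γ '' piece k) := ENNReal.tsum_le_tsum hpiece_le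
    _ = μH[1] (γ '' A) := by
        rw [← measure_iUnion himage_disj himage_meas, ← Set.image_iUnion, ← hA_eq]

lemma hausdorffMeasure_image_eq_mul_volume {K : ℝ≥0} (hγ : LipschitzOnWith K γ A)
    (hexp : ∀ c < K, ∃ δ > 0, ∀ s ∈ A, ∀ t ∈ A, |s - t| ≤ δ → c * |s - t| ≤ dist (γ s) (γ t))
    (hA : MeasurableSet A) (hinj : A.InjOn γ) :
    μH[1] (γ '' A) = K * volume A := by
  apply le_antisymm
  · simpa [hausdorffMeasure_real] using hγ.hausdorffMeasure_image_le zero_le_one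
  · refine ENNReal.mul_le_of_forall_lt fun c hc b hb => ?_
    lift c to ℝ≥0 using hc.ne_top
    rcases eq_or_ne c 0 with rfl | hc0
    · simp
    obtain ⟨δ, hδ, hexpδ⟩ := hexp c (ENNReal.coe_lt_coe.1 hc)
    calc c * b ≤ c * volume A := by gcongr
      _ ≤ μH[1] (γ '' A) :=
        mul_volume_le_hausdorffMeasure_image hδ hc0 hγ.continuousOn hA hinj hexpδ

end CurveLength

section Circle

lemma dist_circleMap (c : ℂ) (R s t : ℝ) :
    dist (circleMap c R s) (circleMap c R t) = |R| * |2 * sin ((s - t) / 2)| := by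
  have hfactor : circleMap c R s - circleMap c R t =
      R * Complex.exp (t * Complex.I) * (Complex.exp (Complex.I * ↑(s - t)) - 1) := by
    rw [mul_sub, mul_assoc, ← Complex.exp_add]
    simp only [circleMap]
    push_cast
    ring_nf
  rw [dist_eq_norm, hfactor, norm_mul, norm_mul, Complex.norm_real, Complex.norm_exp_ofReal_mul_I,
    Complex.norm_exp_I_mul_ofReal_sub_one, mul_one, norm_eq_abs, norm_eq_abs]

lemma one_sub_sq_mul_abs_le_abs_two_mul_sin_half (x : ℝ) :
    (1 - x ^ 2) * |x| ≤ |2 * sin (x / 2)| := by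
  wlog hx : 0 < x generalizing x
  · rcases (not_lt.1 hx).eq_or_lt with rfl | hneg
    · simp
    · simpa [neg_div] using this (-x) (neg_pos.2 hneg)
  have hcube := sin_gt_sub_cube (half_pos hx)
  rw [abs_of_pos hx]
  refine le_trans ?_ (le_abs_self _)
  nlinarith [pow_pos hx 3]

lemma exists_forall_mul_abs_sub_le_dist_circleMap (c : ℂ) {R a : ℝ} (ha : a < |R|) :
    ∃ δ > 0, ∀ s t, |s - t| ≤ δ → a * |s - t| ≤ dist (circleMap c R s) (circleMap c R t) := by
  have hlim : Tendsto (fun x : ℝ => |R| * (1 - x ^ 2)) (𝓝 0) (𝓝 |R|) := by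
    have : Continuous fun x : ℝ => |R| * (1 - x ^ 2) := by fun_prop
    simpa using this.tendsto 0
  obtain ⟨δ, hδ, hball⟩ := Metric.eventually_nhds_iff.1 (hlim.eventually (lt_mem_nhds ha))
  refine ⟨δ / 2, half_pos hδ, fun s t hst => ?_⟩
  have hlt : a < |R| * (1 - (s - t) ^ 2) := hball (by rw [Real.dist_0_eq_abs]; linarith)
  calc a * |s - t| ≤ |R| * (1 - (s - t) ^ 2) * |s - t| := by gcongr
    _ ≤ |R| * |2 * sin ((s - t) / 2)| := by
      rw [mul_assoc]
      gcongr
      exact one_sub_sq_mul_abs_le_abs_two_mul_sin_half _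
    _ = dist (circleMap c R s) (circleMap c R t) := (dist_circleMap c R s t).symm

lemma hausdorffMeasure_restrict_sphere (c : ℂ) {R : ℝ} (hR : 0 < R) :
    (μH[1] : Measure ℂ).restrict (sphere c R) =
      ENNReal.ofReal R • (volume.restrict (Set.Ioc (-π) π)).map (circleMap c R) := by
  have hmeas : Measurable (circleMap c R) := (continuous_circleMap c R).measurable
  have hinj : (Set.Ioc (-π) π).InjOn (circleMap c R) := by
    rw [← Set.uIoc_of_le (by linarith [pi_pos])]
    refine injOn_circleMap_of_abs_sub_le hR.ne' ?_
    rw [abs_of_neg] <;> linarith [pi_pos]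
  have hsphere : circleMap c R '' Set.Ioc (-π) π = sphere c R := by
    have hrange : Set.range (circleMap c R) = sphere c R := by rw [range_circleMap, abs_of_pos hR]
    rw [← hrange, ← (periodic_circleMap c R).image_Ioc two_pi_pos (-π)]
    ring_nf
  ext S hS
  rw [Measure.restrict_apply hS, ← hsphere, ← Set.image_preimage_inter,
    hausdorffMeasure_image_eq_mul_volume (lipschitzWith_circleMap c R).lipschitzOnWith
      (fun a ha => (exists_forall_mul_abs_sub_le_dist_circleMap c (by exact_mod_cast ha)).imp
        fun _ hδ => ⟨hδ.1, fun s _ t _ => hδ.2 s t⟩)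
      ((hmeas hS).inter measurableSet_Ioc) (hinj.mono Set.inter_subset_right)]
  simp [hmeas hS, Measure.map_apply hmeas hS, ENNReal.ofReal, Real.nnabs_of_nonneg hR.le]

lemma setIntegral_sphere_eq_intervalIntegral (c : ℂ) {R : ℝ} (hR : 0 < R)
    {E : Type*} [NormedAddCommGroup E] [NormedSpace ℝ E] {g : ℂ → E}
    (hg : ContinuousOn g (sphere c R)) :
    ∫ x in sphere c R, g x ∂μH[1] = R • ∫ θ in -π..π, g (circleMap c R θ) := by
  have hmeas : AEStronglyMeasurable g ((μH[1] : Measure ℂ).restrict (sphere c R)) :=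
    hg.aestronglyMeasurable_of_isCompact (isCompact_sphere c R) isClosed_sphere.measurableSet
  rw [hausdorffMeasure_restrict_sphere c hR] at hmeas ⊢
  rw [integral_smul_measure, ENNReal.toReal_ofReal hR.le,
    integral_map (continuous_circleMap c R).aemeasurable, intervalIntegral.integral_of_le
      (by linarith [pi_pos])]
  exact hmeas.mono_ac (Measure.absolutelyContinuous_smul (by simpa using hR))

end Circle

section Polar

lemma trace_eq_inner_add_inner_mul_I (L : ℂ →ₗ[ℝ] ℂ) (w : Circle) :
    LinearMap.trace ℝ ℂ L = ⟪(w : ℂ), L w⟫ + ⟪w * Complex.I, L (w * Complex.I)⟫ := by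
  rw [LinearMap.trace_eq_sum_inner L (Complex.orthonormalBasisOneI.map (rotation w))]
  simp [-Complex.inner, rotation_apply]

lemma circleMap_eq_add_smul (c : ℂ) (r θ : ℝ) :
    circleMap c r θ = c + r • circleMap 0 1 θ := by
  simp [circleMap]

lemma contDiff_circleMap_zero_one_snd {n : WithTop ℕ∞} :
    ContDiff ℝ n (fun a : ℝ × ℝ => circleMap 0 1 a.2) :=
  (contDiff_circleMap 0 1).comp contDiff_snd

lemma contDiff_circleMap_uncurry (c : ℂ) {n : WithTop ℕ∞} :
    ContDiff ℝ n (fun a : ℝ × ℝ => circleMap c a.1 a.2) := by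
  simp only [circleMap_eq_add_smul c]
  exact contDiff_const.add (contDiff_fst.smul contDiff_circleMap_zero_one_snd)

lemma fderiv_circleMap_zero_one_snd_apply (a w : ℝ × ℝ) :
    fderiv ℝ (fun a : ℝ × ℝ => circleMap 0 1 a.2) a w = w.2 • (circleMap 0 1 a.2 * Complex.I) := by
  have hderiv := (hasDerivAt_circleMap 0 1 a.2).hasFDerivAt.comp a hasFDerivAt_snd
  exact DFunLike.congr_fun hderiv.fderiv w

lemma fderiv_circleMap_uncurry_apply (c : ℂ) (a w : ℝ × ℝ) :
    fderiv ℝ (fun a : ℝ × ℝ => circleMap c a.1 a.2) a w =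
      w.1 • circleMap 0 1 a.2 + (a.1 * w.2) • (circleMap 0 1 a.2 * Complex.I) := by
  simp only [circleMap_eq_add_smul c]
  rw [fderiv_const_add, fderiv_fun_smul differentiableAt_fst
    (contDiff_circleMap_zero_one_snd.differentiable one_ne_zero a)]
  simp [fderiv_circleMap_zero_one_snd_apply, fderiv_fst, mul_smul, add_comm]

/-- The flux density of `F` across the circles centred at `c`, in polar coordinates
`a = (r, θ)` around `c`. -/
def radialFlux (c : ℂ) (F : ℂ → ℂ) (a : ℝ × ℝ) : ℝ :=
  a.1 * ⟪circleMap 0 1 a.2, F (circleMap c a.1 a.2)⟫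

/-- The flux density of `F` across the rays issued from `c`, in polar coordinates
`a = (r, θ)` around `c`. -/
def angularFlux (c : ℂ) (F : ℂ → ℂ) (a : ℝ × ℝ) : ℝ :=
  ⟪circleMap 0 1 a.2 * Complex.I, F (circleMap c a.1 a.2)⟫

variable {c : ℂ} {F : ℂ → ℂ} {a : ℝ × ℝ}

lemma contDiffAt_radialFlux {n : WithTop ℕ∞} (hF : ContDiffAt ℝ n F (circleMap c a.1 a.2)) :
    ContDiffAt ℝ n (radialFlux c F) a :=
  contDiffAt_fst.mul (contDiff_circleMap_zero_one_snd.contDiffAt.inner ℝ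
    (hF.comp a (contDiff_circleMap_uncurry c).contDiffAt))

lemma contDiffAt_angularFlux {n : WithTop ℕ∞} (hF : ContDiffAt ℝ n F (circleMap c a.1 a.2)) :
    ContDiffAt ℝ n (angularFlux c F) a :=
  (contDiff_circleMap_zero_one_snd.contDiffAt.mul contDiffAt_const).inner ℝ
    (hF.comp a (contDiff_circleMap_uncurry c).contDiffAt)

lemma fderiv_comp_circleMap_uncurry_apply (hF : DifferentiableAt ℝ F (circleMap c a.1 a.2))
    (w : ℝ × ℝ) :
    fderiv ℝ (fun a : ℝ × ℝ => F (circleMap c a.1 a.2)) a w =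
      w.1 • fderiv ℝ F (circleMap c a.1 a.2) (circleMap 0 1 a.2) +
        (a.1 * w.2) • fderiv ℝ F (circleMap c a.1 a.2) (circleMap 0 1 a.2 * Complex.I) := by
  rw [fderiv_fun_comp a hF ((contDiff_circleMap_uncurry c).differentiable one_ne_zero a),
    ContinuousLinearMap.comp_apply, fderiv_circleMap_uncurry_apply, map_add, map_smul, map_smul]

lemma fderiv_radialFlux_apply (hF : DifferentiableAt ℝ F (circleMap c a.1 a.2)) :
    fderiv ℝ (radialFlux c F) a (1, 0) =
      ⟪circleMap 0 1 a.2, F (circleMap c a.1 a.2)⟫ +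
        a.1 * ⟪circleMap 0 1 a.2, fderiv ℝ F (circleMap c a.1 a.2) (circleMap 0 1 a.2)⟫ := by
  have hnormal : DifferentiableAt ℝ (fun a : ℝ × ℝ => circleMap 0 1 a.2) a :=
    contDiff_circleMap_zero_one_snd.differentiable one_ne_zero a
  have hcomp : DifferentiableAt ℝ (fun a : ℝ × ℝ => F (circleMap c a.1 a.2)) a :=
    hF.fun_comp' a ((contDiff_circleMap_uncurry c).differentiable one_ne_zero a)
  unfold radialFlux
  rw [fderiv_fun_mul differentiableAt_fst (hnormal.inner ℝ hcomp)]
  simp [-Complex.inner, fderiv_inner_apply ℝ hnormal hcomp, fderiv_circleMap_zero_one_snd_apply,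
    fderiv_comp_circleMap_uncurry_apply hF, fderiv_fst, add_comm]

lemma fderiv_angularFlux_apply (hF : DifferentiableAt ℝ F (circleMap c a.1 a.2)) :
    fderiv ℝ (angularFlux c F) a (0, 1) =
      -⟪circleMap 0 1 a.2, F (circleMap c a.1 a.2)⟫ + a.1 * ⟪circleMap 0 1 a.2 * Complex.I,
        fderiv ℝ F (circleMap c a.1 a.2) (circleMap 0 1 a.2 * Complex.I)⟫ := by
  have hnormal : DifferentiableAt ℝ (fun a : ℝ × ℝ => circleMap 0 1 a.2) a :=
    contDiff_circleMap_zero_one_snd.differentiable one_ne_zero a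
  have hcomp : DifferentiableAt ℝ (fun a : ℝ × ℝ => F (circleMap c a.1 a.2)) a :=
    hF.fun_comp' a ((contDiff_circleMap_uncurry c).differentiable one_ne_zero a)
  have htangent : fderiv ℝ (fun a : ℝ × ℝ => circleMap 0 1 a.2 * Complex.I) a (0, 1) =
      -circleMap 0 1 a.2 := by
    rw [fderiv_mul_const hnormal]
    simp [fderiv_circleMap_zero_one_snd_apply, mul_comm Complex.I, mul_assoc]
  unfold angularFlux
  rw [fderiv_inner_apply ℝ (hnormal.mul_const Complex.I) hcomp, htangent,
    fderiv_comp_circleMap_uncurry_apply hF, zero_smul, zero_add, mul_one, real_inner_smul_right,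
    inner_neg_left, add_comm]

lemma fderiv_radialFlux_add_fderiv_angularFlux
    (hF : DifferentiableAt ℝ F (circleMap c a.1 a.2)) :
    fderiv ℝ (radialFlux c F) a (1, 0) + fderiv ℝ (angularFlux c F) a (0, 1) =
      a.1 * divergence F (circleMap c a.1 a.2) := by
  rw [fderiv_radialFlux_apply hF, fderiv_angularFlux_apply hF, divergence,
    trace_eq_inner_add_inner_mul_I _ (Circle.exp a.2)]
  simp only [ContinuousLinearMap.coe_coe, Circle.coe_exp, circleMap_zero, Complex.ofReal_one,
    one_mul]
  ring

lemma setIntegral_ball_eq_setIntegral_polar (c : ℂ) (R : ℝ)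
    {E : Type*} [NormedAddCommGroup E] [NormedSpace ℝ E] (G : ℂ → E) :
    ∫ x in ball c R, G x =
      ∫ a in Set.Icc (0, -π) (R, π), a.1 • G (circleMap c a.1 a.2) := by
  let sector : Set (ℝ × ℝ) := Set.Ioo 0 R ×ˢ Set.Ioo (-π) π
  have hsector : polarCoord.target ∩ sector = sector :=
    Set.inter_eq_right.2 (Set.prod_mono Set.Ioo_subset_Ioi_self subset_rfl)
  have hpolar : ∀ a ∈ polarCoord.target,
      a.1 • (ball c R).indicator G (c + Complex.polarCoord.symm a) =
        sector.indicator (fun a => a.1 • G (circleMap c a.1 a.2)) a := by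
    rintro ⟨r, θ⟩ ⟨hr, hθ⟩
    have hcircle : c + Complex.polarCoord.symm (r, θ) = circleMap c r θ := by
      simp [Complex.polarCoord_symm_apply, circleMap, Complex.exp_mul_I]
    have hmem : circleMap c r θ ∈ ball c R ↔ (r, θ) ∈ sector := by
      rw [mem_ball, dist_eq_norm, circleMap_sub_center, norm_circleMap_zero, abs_of_pos hr]
      exact ⟨fun hrR => ⟨⟨hr, hrR⟩, hθ⟩, fun h => h.1.2⟩
    rw [hcircle]
    by_cases h : (r, θ) ∈ sector
    · rw [Set.indicator_of_mem (hmem.2 h), Set.indicator_of_mem h]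
    · rw [Set.indicator_of_notMem (mt hmem.1 h), Set.indicator_of_notMem h, smul_zero]
  calc ∫ x in ball c R, G x = ∫ x, (ball c R).indicator G (c + x) := by
        rw [integral_add_left_eq_self, integral_indicator measurableSet_ball]
    _ = ∫ a in polarCoord.target, sector.indicator (fun a => a.1 • G (circleMap c a.1 a.2)) a := by
        rw [← Complex.integral_comp_polarCoord_symm]
        exact setIntegral_congr_fun polarCoord.open_target.measurableSet hpolar
    _ = ∫ a in sector, a.1 • G (circleMap c a.1 a.2) := by
        rw [setIntegral_indicator (measurableSet_Ioo.prod measurableSet_Ioo), hsector]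
    _ = ∫ a in Set.Icc (0, -π) (R, π), a.1 • G (circleMap c a.1 a.2) := by
        rw [← Set.Icc_prod_Icc]
        exact setIntegral_congr_set (Measure.set_prod_ae_eq Ioo_ae_eq_Icc Ioo_ae_eq_Icc)

lemma setIntegral_Icc_mul_divergence_circleMap {R : ℝ} (hR : 0 < R)
    (hF : ∀ x ∈ closedBall c R, ContDiffAt ℝ 1 F x) :
    ∫ a in Set.Icc (0, -π) (R, π), a.1 * divergence F (circleMap c a.1 a.2) =
      R * ∫ θ in -π..π, ⟪circleMap 0 1 θ, F (circleMap c R θ)⟫ := by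
  have hcircle : ∀ a ∈ Set.Icc ((0 : ℝ), -π) (R, π), ContDiffAt ℝ 1 F (circleMap c a.1 a.2) := by
    intro a ha
    exact hF _ (closedBall_subset_closedBall ha.2.1 (circleMap_mem_closedBall c ha.1.1 a.2))
  have hradial := fun a ha => contDiffAt_radialFlux (hcircle a ha)
  have hangular := fun a ha => contDiffAt_angularFlux (hcircle a ha)
  have hinterior : Set.Ioo 0 R ×ˢ Set.Ioo (-π) π ⊆ Set.Icc ((0 : ℝ), -π) (R, π) := by
    rw [← Set.Icc_prod_Icc]
    exact Set.prod_mono Set.Ioo_subset_Icc_self Set.Ioo_subset_Icc_self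
  have hcont : ContinuousOn (fun a => fderiv ℝ (radialFlux c F) a (1, 0) +
      fderiv ℝ (angularFlux c F) a (0, 1)) (Set.Icc (0, -π) (R, π)) := fun a ha =>
    ((((hradial a ha).continuousAt_fderiv one_ne_zero).clm_apply continuousAt_const).add
      (((hangular a ha).continuousAt_fderiv one_ne_zero).clm_apply
        continuousAt_const)).continuousWithinAt
  have hstokes := integral_divergence_prod_Icc_of_hasFDerivAt_of_le (radialFlux c F)
    (angularFlux c F) (fderiv ℝ (radialFlux c F)) (fderiv ℝ (angularFlux c F)) (0, -π) (R, π)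
    ⟨hR.le, by linarith [pi_pos]⟩
    (fun a ha => (hradial a ha).continuousAt.continuousWithinAt)
    (fun a ha => (hangular a ha).continuousAt.continuousWithinAt)
    (fun a ha => ((hradial a (hinterior ha)).differentiableAt one_ne_zero).hasFDerivAt)
    (fun a ha => ((hangular a (hinterior ha)).differentiableAt one_ne_zero).hasFDerivAt)
    (hcont.integrableOn_compact isCompact_Icc)
  have hperiodic (r : ℝ) : angularFlux c F (r, π) = angularFlux c F (r, -π) := by
    simp [angularFlux, circleMap]
  rw [← setIntegral_congr_fun measurableSet_Icc fun a ha =>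
    fderiv_radialFlux_add_fderiv_angularFlux ((hcircle a ha).differentiableAt one_ne_zero), hstokes]
  simp [hperiodic, radialFlux, -Complex.inner]

lemma setIntegral_ball_divergence_complex {R : ℝ} (hR : 0 < R)
    (hF : ∀ x ∈ closedBall c R, ContDiffAt ℝ 1 F x) :
    ∫ x in ball c R, divergence F x =
      ∫ x in sphere c R, ⟪F x, R⁻¹ • (x - c)⟫ ∂μH[1] := by
  have hcont : ContinuousOn (fun x => ⟪F x, R⁻¹ • (x - c)⟫) (sphere c R) := by
    have hF' : ContinuousOn F (sphere c R) := fun x hx =>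
      (hF x (sphere_subset_closedBall hx)).continuousAt.continuousWithinAt
    fun_prop
  have hnormal (θ : ℝ) : R⁻¹ • (circleMap c R θ - c) = circleMap 0 1 θ := by
    rw [circleMap_eq_add_smul c, add_sub_cancel_left, inv_smul_smul₀ hR.ne']
  rw [setIntegral_ball_eq_setIntegral_polar, setIntegral_sphere_eq_intervalIntegral c hR hcont]
  simp only [hnormal, smul_eq_mul, real_inner_comm (circleMap 0 1 _)]
  exact setIntegral_Icc_mul_divergence_circleMap hR hF

end Polar

section Plane

variable {E : Type*} [NormedAddCommGroup E] [InnerProductSpace ℝ E] [FiniteDimensional ℝ E]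

lemma nonempty_complex_linearIsometryEquiv (hE : Module.finrank ℝ E = 2) :
    Nonempty (ℂ ≃ₗᵢ[ℝ] E) :=
  ⟨Complex.isometryOfOrthonormal ((stdOrthonormalBasis ℝ E).reindex (finCongr hE))⟩

variable [MeasurableSpace E] [BorelSpace E] {z : E} {R : ℝ}

lemma hausdorffMeasure_sphere_lt_top (hE : Module.finrank ℝ E = 2) (z : E) (hR : 0 < R) :
    μH[1] (sphere z R) < ∞ := by
  obtain ⟨φ⟩ := nonempty_complex_linearIsometryEquiv hE
  rw [← φ.apply_symm_apply z, ← φ.image_sphere,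
    φ.isometry.hausdorffMeasure_image (.inl zero_le_one), ← Measure.restrict_apply_univ,
    hausdorffMeasure_restrict_sphere _ hR, Measure.smul_apply]
  exact ENNReal.mul_lt_top ENNReal.ofReal_lt_top (measure_lt_top _ _)

lemma integrableOn_sphere_hausdorffMeasure_of_continuousOn (hE : Module.finrank ℝ E = 2)
    (hR : 0 < R) {F : Type*} [NormedAddCommGroup F] {g : E → F}
    (hg : ContinuousOn g (sphere z R)) : IntegrableOn g (sphere z R) μH[1] :=
  hg.integrableOn_of_subset_isCompact (isCompact_sphere z R) isClosed_sphere.measurableSet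
    subset_rfl (hausdorffMeasure_sphere_lt_top hE z hR).ne

theorem setIntegral_ball_divergence (hE : Module.finrank ℝ E = 2) (hR : 0 < R) {F : E → E}
    (hF : ∀ x ∈ closedBall z R, ContDiffAt ℝ 1 F x) :
    ∫ x in ball z R, divergence F x = ∫ x in sphere z R, ⟪F x, R⁻¹ • (x - z)⟫ ∂μH[1] := by
  obtain ⟨φ⟩ := nonempty_complex_linearIsometryEquiv hE
  have hF' : ∀ w ∈ closedBall (φ.symm z) R, ContDiffAt ℝ 1 (fun w => φ.symm (F (φ w))) w := by
    intro w hw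
    rw [← φ.preimage_closedBall] at hw
    exact φ.symm.contDiff.contDiffAt.comp w ((hF _ hw).comp w φ.contDiff.contDiffAt)
  have hflux (w : ℂ) :
      ⟪φ.symm (F (φ w)), R⁻¹ • (w - φ.symm z)⟫ = ⟪F (φ w), R⁻¹ • (φ w - z)⟫ := by
    rw [← φ.inner_map_map, map_smul, map_sub, φ.apply_symm_apply, φ.apply_symm_apply]
  rw [← φ.measurePreserving.setIntegral_preimage_emb φ.toMeasurableEquiv.measurableEmbedding,
    ← (φ.toIsometryEquiv.measurePreserving_hausdorffMeasure 1).setIntegral_preimage_emb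
      φ.toMeasurableEquiv.measurableEmbedding]
  calc ∫ w in φ ⁻¹' ball z R, divergence F (φ w)
      = ∫ w in ball (φ.symm z) R, divergence (fun w => φ.symm (F (φ w))) w := by
        rw [φ.preimage_ball]
        exact integral_congr_ae (.of_forall fun w =>
          (divergence_conj φ.toContinuousLinearEquiv F w).symm)
    _ = ∫ w in sphere (φ.symm z) R, ⟪φ.symm (F (φ w)), R⁻¹ • (w - φ.symm z)⟫ ∂μH[1] :=
        setIntegral_ball_divergence_complex hR hF'
    _ = ∫ w in φ ⁻¹' sphere z R, ⟪F (φ w), R⁻¹ • (φ w - z)⟫ ∂μH[1] := by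
        simp only [hflux, φ.preimage_sphere]

end Plane

section PohozaevIdentity

open scoped Laplacian

lemma hasGradientAt_rpow_add_one_div {E : Type*} [NormedAddCommGroup E] [InnerProductSpace ℝ E]
    [CompleteSpace E] {f : E → ℝ} {x : E} {p : ℝ} (hf : DifferentiableAt ℝ f x) (hfx : 0 < f x)
    (hp : p ≠ -1) :
    HasGradientAt (fun x => f x ^ (p + 1) / (p + 1)) (f x ^ p • gradient f x) x := by
  have hp' : p + 1 ≠ 0 := fun h => hp (eq_neg_of_add_eq_zero_left h)
  have hrpow : HasDerivAt (fun t : ℝ => t ^ (p + 1) / (p + 1)) (f x ^ p) (f x) := by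
    simpa [hp'] using (hasDerivAt_rpow_const (p := p + 1) (.inl hfx.ne')).div_const (p + 1)
  rw [hasGradientAt_iff_hasFDerivAt, map_smul]
  exact hrpow.comp_hasFDerivAt x hf.hasGradientAt.hasFDerivAt

variable {E : Type*} [NormedAddCommGroup E] [InnerProductSpace ℝ E] [FiniteDimensional ℝ E]

lemma inner_pohozaevField (u v H : E → ℝ) (y x n : E) :
    ⟪pohozaevField u v H y x, n⟫ =
      ⟪gradient u x, n⟫ * ⟪gradient v x, x - y⟫ + ⟪gradient v x, n⟫ * ⟪gradient u x, x - y⟫ -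
        ⟪gradient u x, gradient v x⟫ * ⟪x - y, n⟫ + ⟪x - y, n⟫ * H x := by
  simp only [pohozaevField, inner_add_left, inner_sub_left, real_inner_smul_left]
  ring

variable [MeasurableSpace E] [BorelSpace E] {u v H : E → ℝ} {z : E} {d : ℝ}

theorem pohozaev_identity_ball (hE : Module.finrank ℝ E = 2) (hd : 0 < d)
    (hu : ∀ x ∈ closedBall z d, ContDiffAt ℝ 2 u x) (hv : ∀ x ∈ closedBall z d, ContDiffAt ℝ 2 v x)
    (hH : ∀ x ∈ closedBall z d, ContDiffAt ℝ 1 H x)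
    (hgrad : ∀ x ∈ ball z d,
      HasGradientAt H (-(Δ u x) • gradient v x - Δ v x • gradient u x) x) (y : E) :
    2 * ∫ x in ball z d, H x =
      (∫ x in sphere z d,
          (⟪gradient u x, d⁻¹ • (x - z)⟫ * ⟪gradient v x, x - y⟫ +
            ⟪gradient v x, d⁻¹ • (x - z)⟫ * ⟪gradient u x, x - y⟫) ∂μH[1]) -
        (∫ x in sphere z d, ⟪gradient u x, gradient v x⟫ * ⟪x - y, d⁻¹ • (x - z)⟫ ∂μH[1]) +
        (∫ x in sphere z d, ⟪x - y, d⁻¹ • (x - z)⟫ * H x ∂μH[1]) := by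
  have hgu : ContinuousOn (gradient u) (sphere z d) := fun x hx =>
    (contDiffAt_gradient (hu x (sphere_subset_closedBall hx))).continuousAt.continuousWithinAt
  have hgv : ContinuousOn (gradient v) (sphere z d) := fun x hx =>
    (contDiffAt_gradient (hv x (sphere_subset_closedBall hx))).continuousAt.continuousWithinAt
  have hHcont : ContinuousOn H (sphere z d) := fun x hx =>
    (hH x (sphere_subset_closedBall hx)).continuousAt.continuousWithinAt
  have hdiv : ∀ x ∈ ball z d, 2 * H x = divergence (pohozaevField u v H y) x := fun x hx => by
    have hx' := ball_subset_closedBall hx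
    simp [divergence_pohozaevField_of_gradient_eq (hu x hx') (hv x hx') (hgrad x hx), hE]
  rw [← integral_const_mul, setIntegral_congr_fun measurableSet_ball hdiv,
    setIntegral_ball_divergence hE hd fun x hx =>
      contDiffAt_pohozaevField (hu x hx) (hv x hx) (hH x hx) y]
  simp only [inner_pohozaevField]
  have hint {g : E → ℝ} (hg : ContinuousOn g (sphere z d)) :=
    integrableOn_sphere_hausdorffMeasure_of_continuousOn hE hd hg
  rw [integral_add, integral_sub]
  all_goals exact hint (by fun_prop)

theorem stmt0_general (hE : Module.finrank ℝ E = 2) {p q : ℝ} (hp : p ≠ -1) (hq : q ≠ -1)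
    (hd : 0 < d)
    (hu : ∀ x ∈ closedBall z d, ContDiffAt ℝ 2 u x) (hv : ∀ x ∈ closedBall z d, ContDiffAt ℝ 2 v x)
    (hupos : ∀ x ∈ closedBall z d, 0 < u x) (hvpos : ∀ x ∈ closedBall z d, 0 < v x)
    (heq1 : ∀ x ∈ ball z d, -(Δ u x) = v x ^ p) (heq2 : ∀ x ∈ ball z d, -(Δ v x) = u x ^ q)
    (y : E) :
    (2 / (p + 1)) * (∫ x in ball z d, v x ^ (p + 1)) +
      (2 / (q + 1)) * (∫ x in ball z d, u x ^ (q + 1)) =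
    (∫ x in sphere z d,
        (⟪gradient u x, d⁻¹ • (x - z)⟫ * ⟪gradient v x, x - y⟫ +
          ⟪gradient v x, d⁻¹ • (x - z)⟫ * ⟪gradient u x, x - y⟫) ∂μH[1]) -
      (∫ x in sphere z d, ⟪gradient u x, gradient v x⟫ * ⟪x - y, d⁻¹ • (x - z)⟫ ∂μH[1]) +
      (∫ x in sphere z d,
        ⟪x - y, d⁻¹ • (x - z)⟫ * (v x ^ (p + 1) / (p + 1) + u x ^ (q + 1) / (q + 1)) ∂μH[1]) := by
  have hcont {f : E → ℝ} (hf : ∀ x ∈ closedBall z d, ContDiffAt ℝ 2 f x)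
      (hpos : ∀ x ∈ closedBall z d, 0 < f x) (s : ℝ) :
      ∀ x ∈ closedBall z d, ContDiffAt ℝ 1 (fun x => f x ^ s) x := fun x hx =>
    ((hf x hx).of_le one_le_two).rpow_const_of_ne (hpos x hx).ne'
  have hint {f : E → ℝ} (hf : ∀ x ∈ closedBall z d, ContDiffAt ℝ 1 f x) :
      IntegrableOn f (ball z d) :=
    (ContinuousOn.integrableOn_compact (isCompact_closedBall z d) fun x hx =>
      (hf x hx).continuousAt.continuousWithinAt).mono_set ball_subset_closedBall
  have hgrad : ∀ x ∈ ball z d, HasGradientAt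
      (fun x => v x ^ (p + 1) / (p + 1) + u x ^ (q + 1) / (q + 1))
      (-(Δ u x) • gradient v x - Δ v x • gradient u x) x := fun x hx => by
    have hx' := ball_subset_closedBall hx
    rw [heq1 x hx, sub_eq_add_neg, ← neg_smul, heq2 x hx, hasGradientAt_iff_hasFDerivAt, map_add]
    exact (hasGradientAt_rpow_add_one_div ((hv x hx').differentiableAt two_ne_zero) (hvpos x hx')
      hp).hasFDerivAt.add (hasGradientAt_rpow_add_one_div ((hu x hx').differentiableAt two_ne_zero)
      (hupos x hx') hq).hasFDerivAt
  rw [← pohozaev_identity_ball hE hd hu hv (fun x hx => ((hcont hv hvpos _ x hx).div_const _).add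
      ((hcont hu hupos _ x hx).div_const _)) hgrad y,
    integral_add ((hint (hcont hv hvpos _)).div_const _) ((hint (hcont hu hupos _)).div_const _),
    integral_div, integral_div]
  ring

end PohozaevIdentity

open scoped Laplacian in
lemma plap_eq_laplacian {f : E2 → ℝ} {x : E2} (hf : ContDiffAt ℝ 2 f x) : plap f x = Δ f x := by
  have hdf : DifferentiableAt ℝ (fderiv ℝ f) x :=
    (hf.fderiv_right (m := 1) (by norm_num)).differentiableAt one_ne_zero
  rw [InnerProductSpace.laplacian_eq_iteratedFDeriv_orthonormalBasis f
    (EuclideanSpace.basisFun (Fin 2) ℝ)]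
  simp [plap, iteratedFDeriv_two_apply, fderiv_clm_apply hdf]

theorem stmt0
    (Ω : Set E2) (hΩo : IsOpen Ω) (hΩb : Bornology.IsBounded Ω) (hΩne : Ω.Nonempty)
    (p q : ℝ) (hp : 0 < p) (hq : 0 < q)
    (u v : E2 → ℝ)
    (huC2 : ContDiffOn ℝ 2 u Ω) (hvC2 : ContDiffOn ℝ 2 v Ω)
    (hupos : ∀ x ∈ Ω, 0 < u x) (hvpos : ∀ x ∈ Ω, 0 < v x)
    (heq1 : ∀ x ∈ Ω, - plap u x = v x ^ p)
    (heq2 : ∀ x ∈ Ω, - plap v x = u x ^ q)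
    (z : E2) (d : ℝ) (hd : 0 < d) (hB : closedBall z d ⊆ Ω)
    (y : E2) :
    (2 / (p + 1)) * (∫ x in ball z d, v x ^ (p + 1)) +
      (2 / (q + 1)) * (∫ x in ball z d, u x ^ (q + 1)) =
    (∫ x in sphere z d,
        (⟪gradient u x, d⁻¹ • (x - z)⟫ * ⟪gradient v x, x - y⟫ +
          ⟪gradient v x, d⁻¹ • (x - z)⟫ * ⟪gradient u x, x - y⟫) ∂μH[1]) -
      (∫ x in sphere z d, ⟪gradient u x, gradient v x⟫ * ⟪x - y, d⁻¹ • (x - z)⟫ ∂μH[1]) +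
      (∫ x in sphere z d,
        ⟪x - y, d⁻¹ • (x - z)⟫ * (v x ^ (p + 1) / (p + 1) + u x ^ (q + 1) / (q + 1)) ∂μH[1]) := by
  have hu : ∀ x ∈ Ω, ContDiffAt ℝ 2 u x := fun x hx => huC2.contDiffAt (hΩo.mem_nhds hx)
  have hv : ∀ x ∈ Ω, ContDiffAt ℝ 2 v x := fun x hx => hvC2.contDiffAt (hΩo.mem_nhds hx)
  have hBall : ball z d ⊆ Ω := ball_subset_closedBall.trans hB
  exact stmt0_general finrank_euclideanSpace_fin (by linarith) (by linarith) hd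
    (fun x hx => hu x (hB hx)) (fun x hx => hv x (hB hx))
    (fun x hx => hupos x (hB hx)) (fun x hx => hvpos x (hB hx))
    (fun x hx => plap_eq_laplacian (hu x (hBall hx)) ▸ heq1 x (hBall hx))
    (fun x hx => plap_eq_laplacian (hv x (hBall hx)) ▸ heq2 x (hBall hx)) y
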